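/- arXiv:math/0410282 — 4 statements merged into one kernel-verified Lean document; each statement's English description precedes it below -/
import Mathlib

section
/- In the monotone ensemble on the wrapped extended butterfly Ω_{H,W}, consider the Las Vegas exploration: pick a uniformly random time slice t₀ and, starting from every vertex of slice t₀, follow all open directed paths forward in time for W steps, reading the input bit of every edge examined along the way. Then for every ε > 0 there is W₀ such that for all W ≥ W₀ and all H = 2^d, the probability that any given input bit is read is at most (4 + ε)·W^{−1}·log W. -/
/-- The endpoint of the outgoing edge with choice bit `c` of a vertex of the
wrapped extended butterfly `Ω_{H,W}`: the vertex `(h, t)` has edges to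
`(2h, t+1)` and `(2h+1, t+1)`. -/
def mstep (H W : ℕ) (c : Bool) (v : ZMod H × ZMod W) : ZMod H × ZMod W :=
  (2 * v.1 + (if c then 1 else 0), v.2 + 1)

/-- In the monotone ensemble, where `η e = true` means that the edge `e` (given
by its source vertex together with the choice bit) is open, `openReach H W η j u v`
says that there is a directed path of `j` open edges from `u` to `v`. -/
def openReach (H W : ℕ) (η : (ZMod H × ZMod W) × Bool → Bool) :
    ℕ → ZMod H × ZMod W → ZMod H × ZMod W → Prop
  | 0, u, v => u = v
  | j + 1, u, v => ∃ c : Bool, η (u, c) = true ∧ openReach H W η j (mstep H W c u) v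

/-- A directed cycle of length exactly `W` (winding once) in the wrapped extended
butterfly `Ω_{H,W}`: the height `c t` at each time slice `t`, together with the
choice bits `b t` of the traversed edges, satisfying the closedness condition. -/
structure BCycle (H W : ℕ) where
  c : ZMod W → ZMod H
  b : ZMod W → Bool
  closed : ∀ t, c (t + 1) = 2 * c t + (if b t then 1 else 0)

/-- The cycle `γ` is fully open in the configuration `η`. -/
def cycleOpen {H W : ℕ} (η : (ZMod H × ZMod W) × Bool → Bool) (γ : BCycle H W) :
    Prop :=
  ∀ t : ZMod W, η ((γ.c t, t), γ.b t) = true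

def mstepSurv (H W : ℕ) (η : (ZMod H × ZMod W) × Bool → Bool) :
    ℕ → ZMod H × ZMod W → Prop
  | 0, _ => True
  | j + 1, v => ∃ e : (ZMod H × ZMod W) × Bool,
      mstep H W e.2 e.1 = v ∧ η e = true ∧ mstepSurv H W η j e.1

theorem reach_back (H W : ℕ) (η : (ZMod H × ZMod W) × Bool → Bool) :
    ∀ (j : ℕ) (u v : ZMod H × ZMod W), openReach H W η (j+1) u v →
      ∃ e : (ZMod H × ZMod W) × Bool,
        mstep H W e.2 e.1 = v ∧ η e = true ∧ openReach H W η j u e.1 := by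
  intro j
  induction j with
  | zero =>
    rintro u v ⟨c, h1, h2⟩
    exact ⟨(u, c), h2, h1, rfl⟩
  | succ j ih =>
    rintro u v ⟨c, h1, h2⟩
    obtain ⟨e, he, ho, hr⟩ := ih _ _ h2
    exact ⟨e, he, ho, c, h1, hr⟩

theorem reach_surv (H W : ℕ) (η : (ZMod H × ZMod W) × Bool → Bool) :
    ∀ (j : ℕ) (u v : ZMod H × ZMod W), openReach H W η j u v → mstepSurv H W η j v := by
  intro j
  induction j with
  | zero => intro u v _; trivial
  | succ j ih =>
    intro u v h
    obtain ⟨e, he, ho, hr⟩ := reach_back H W η j u v h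
    exact ⟨e, he, ho, ih _ _ hr⟩

theorem reach_time (H W : ℕ) (η : (ZMod H × ZMod W) × Bool → Bool) :
    ∀ (j : ℕ) (u v : ZMod H × ZMod W), openReach H W η j u v → v.2 = u.2 + j := by
  intro j
  induction j with
  | zero => intro u v h; simp [openReach] at h; simp [h]
  | succ j ih =>
    rintro u v ⟨c, h1, h2⟩
    rw [ih _ _ h2]; simp [mstep]; ring

theorem surv_mono (H W : ℕ) (η η' : (ZMod H × ZMod W) × Bool → Bool) (h : η ≤ η') :
    ∀ (j : ℕ) (v : ZMod H × ZMod W), mstepSurv H W η j v → mstepSurv H W η' j v := by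
  intro j
  induction j with
  | zero => intro v _; trivial
  | succ j ih =>
    rintro v ⟨e, he, ho, hr⟩
    exact ⟨e, he, (h e) ho, ih _ hr⟩

theorem surv_congr (H W : ℕ) (η η' : (ZMod H × ZMod W) × Bool → Bool)
    (e : (ZMod H × ZMod W) × Bool) (h : ∀ x, x ≠ e → η x = η' x) :
    ∀ (j : ℕ) (v : ZMod H × ZMod W),
      (∀ i : ℕ, 1 ≤ i → i ≤ j → v.2 ≠ e.1.2 + i) →
      mstepSurv H W η j v → mstepSurv H W η' j v := by
  intro j
  induction j with
  | zero => intro v _ _; trivial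
  | succ j ih =>
    rintro v hv ⟨x, he, ho, hr⟩
    have h2 : v.2 = x.1.2 + 1 := by rw [← he]; rfl
    refine ⟨x, he, ?_, ih _ ?_ hr⟩
    · rw [← h x]
      · exact ho
      · rintro rfl
        exact hv 1 le_rfl (by omega) (by simpa using h2)
    · intro i h1 hi hc
      apply hv (i+1) (by omega) (by omega)
      rw [h2, hc]; push_cast; ring

theorem preds (d H W : ℕ) (hH : H = 2 ^ d) (v : ZMod H × ZMod W) :
    ∃ e₁ e₂ : (ZMod H × ZMod W) × Bool, e₁.1.2 + 1 = v.2 ∧ e₂.1.2 + 1 = v.2 ∧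
      ∀ e : (ZMod H × ZMod W) × Bool, mstep H W e.2 e.1 = v → e = e₁ ∨ e = e₂ := by
  obtain ⟨h, t⟩ := v
  cases d with
  | zero =>
    subst hH
    refine ⟨((0, t-1), false), ((0, t-1), true), by simp, by simp, ?_⟩
    rintro ⟨⟨a, s⟩, c⟩ he
    have hs : s = t - 1 := by
      have := congrArg Prod.snd he
      simp [mstep] at this
      rw [← this]; ring
    have ha : a = 0 := @Subsingleton.elim (ZMod 1) inferInstance _ _
    subst hs ha
    cases c <;> simp
  | succ d =>
    set M := 2 ^ d with hM
    have hM0 : 0 < M := by positivity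
    have hH2 : H = 2 * M := by rw [hH, pow_succ]; ring
    haveI : NeZero H := ⟨by omega⟩
    refine ⟨(((h.val / 2 : ℕ), t-1), decide (h.val % 2 = 1)),
      (((h.val / 2 + M : ℕ), t-1), decide (h.val % 2 = 1)), by simp, by simp, ?_⟩
    rintro ⟨⟨a, s⟩, c⟩ he
    have hs : s = t - 1 := by
      have := congrArg Prod.snd he
      simp [mstep] at this
      rw [← this]; ring
    have h1 : 2 * a + (if c then 1 else 0) = h := congrArg Prod.fst he
    obtain ⟨x, hx⟩ : ∃ x, x = a.val := ⟨_, rfl⟩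
    have hxH : x < H := hx ▸ ZMod.val_lt a
    have hxa : a = (x : ZMod H) := by rw [hx]; simp
    obtain ⟨b, hb⟩ : ∃ b : ℕ, b = if c then 1 else 0 := ⟨_, rfl⟩
    have hb2 : b ≤ 1 := by rw [hb]; split <;> simp
    have h2 : h.val = (2 * x + b) % H := by
      rw [← ZMod.val_natCast, ← h1, hxa, hb]
      push_cast; rfl
    have h3 := Nat.mod_add_div (2 * x + b) H
    have h4 : (2 * x + b) / H < 2 := by
      rw [Nat.div_lt_iff_lt_mul (by omega)]; omega
    rw [← h2] at h3
    obtain ⟨k, hk⟩ : ∃ k, k = (2 * x + b) / H := ⟨_, rfl⟩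
    rw [← hk] at h3 h4
    have hc : c = decide (h.val % 2 = 1) := by
      have : h.val % 2 = b := by
        interval_cases k <;> omega
      rw [this, hb]; cases c <;> simp
    have hxx : x = h.val / 2 ∨ x = h.val / 2 + M := by
      interval_cases k
      · left; omega
      · right; omega
    rw [← hc, hs, hxa]
    rcases hxx with h | h
    · left; rw [← h]
    · right; rw [← h]

noncomputable def prb {E : Type} [Fintype E] [DecidableEq E] (A : (E → Bool) → Prop) : ℝ :=
  by classical exact ((Finset.univ.filter A).card : ℝ) / 2 ^ Fintype.card E

section
variable {E : Type} [Fintype E] [DecidableEq E]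

theorem prb_eq (A : (E → Bool) → Prop) [DecidablePred A] :
    prb A = ((Finset.univ.filter A).card : ℝ) / 2 ^ Fintype.card E := by
  unfold prb
  congr!

theorem prb_nonneg (A : (E → Bool) → Prop) : 0 ≤ prb A := by
  unfold prb; positivity

theorem prb_mono {A B : (E → Bool) → Prop} (h : ∀ η, A η → B η) : prb A ≤ prb B := by
  classical
  unfold prb
  gcongr
  exact h _

theorem prb_le_one (A : (E → Bool) → Prop) : prb A ≤ 1 := by
  classical
  unfold prb
  rw [div_le_one (by positivity)]
  have := Finset.card_le_univ (Finset.univ.filter A)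
  simp only [Fintype.card_fun, Fintype.card_bool] at this
  exact_mod_cast this

theorem prb_or (A B : (E → Bool) → Prop) :
    prb (fun η => A η ∨ B η) + prb (fun η => A η ∧ B η) = prb A + prb B := by
  classical
  rw [prb_eq, prb_eq, prb_eq, prb_eq, ← add_div, ← add_div, Finset.filter_or, Finset.filter_and]
  congr 1
  exact_mod_cast Finset.card_union_add_card_inter _ _

theorem prb_fkg (A B : (E → Bool) → Prop) (hA : ∀ η η', η ≤ η' → A η → A η')
    (hB : ∀ η η', η ≤ η' → B η → B η') :
    prb A * prb B ≤ prb (fun η => A η ∧ B η) := by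
  classical
  have key := fkg (α := E → Bool) (β := ℝ) (f := fun η => if A η then 1 else 0)
    (g := fun η => if B η then 1 else 0) (μ := fun _ => 1) (fun _ => by simp)
    (fun η => by simp only [Pi.zero_apply]; split <;> simp)
    (fun η => by simp only [Pi.zero_apply]; split <;> simp)
    (fun a b h => by
      by_cases h1 : A a
      · simp [h1, hA _ _ h h1]
      · simp only [h1, if_false]; split <;> simp)
    (fun a b h => by
      by_cases h1 : B a
      · simp [h1, hB _ _ h h1]
      · simp only [h1, if_false]; split <;> simp)
    (fun _ _ => by simp)
  have hm : ∀ η, (if A η then (1:ℝ) else 0) * (if B η then 1 else 0)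
      = if A η ∧ B η then 1 else 0 := by
    intro η
    by_cases h1 : A η <;> by_cases h2 : B η <;> simp [h1, h2]
  simp only [one_mul, hm, Finset.sum_boole,
    Finset.sum_const, Finset.card_univ, Fintype.card_fun, Fintype.card_bool, nsmul_eq_mul] at key
  rw [prb_eq, prb_eq, prb_eq,
    div_mul_div_comm, div_le_div_iff₀ (by positivity) (by positivity)]
  push_cast at key
  have h2 : (0:ℝ) < 2 ^ Fintype.card E := by positivity
  nlinarith

theorem prb_half (e : E) (A : (E → Bool) → Prop)
    (hA : ∀ η η', (∀ x, x ≠ e → η x = η' x) → A η → A η') :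
    prb (fun η => η e = true ∧ A η) = prb A / 2 := by
  classical
  have h1 : (Finset.univ.filter (fun η : E → Bool => η e = true ∧ A η)).card
      = (Finset.univ.filter (fun η : E → Bool => ¬ η e = true ∧ A η)).card := by
    refine Finset.card_bij' (fun η _ => Function.update η e (!η e))
      (fun η _ => Function.update η e (!η e)) ?_ ?_ ?_ ?_
    · intro η h
      simp only [Finset.mem_filter, Finset.mem_univ, true_and] at h ⊢
      exact ⟨by simp [h.1], hA _ _ (fun x hx => by simp [hx]) h.2⟩
    · intro η h
      simp only [Finset.mem_filter, Finset.mem_univ, true_and] at h ⊢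
      exact ⟨by simp [h.1], hA _ _ (fun x hx => by simp [hx]) h.2⟩
    · intro η h; simp
    · intro η h; simp
  have h2 : (Finset.univ.filter A).card
      = (Finset.univ.filter (fun η : E → Bool => η e = true ∧ A η)).card
      + (Finset.univ.filter (fun η : E → Bool => ¬ η e = true ∧ A η)).card := by
    rw [← Finset.card_filter_add_card_filter_not (s := Finset.univ.filter A)
      (fun η : E → Bool => η e = true), Finset.filter_filter, Finset.filter_filter]
    simp only [and_comm]
  rw [prb_eq, prb_eq, h2, ← h1]
  push_cast
  ring
end

theorem surv_bound (d H W : ℕ) [NeZero H] [NeZero W] (hH : H = 2 ^ d) :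
    ∀ j : ℕ, j < W → ∀ v : ZMod H × ZMod W,
      prb (fun η => mstepSurv H W η j v) ≤ 4 / ((j:ℝ) + 4) := by
  intro j
  induction j with
  | zero => intro _ v; simpa using prb_le_one _
  | succ j ih =>
    intro hj v
    obtain ⟨e₁, e₂, ht1, ht2, he⟩ := preds d H W hH v
    have half : ∀ e : (ZMod H × ZMod W) × Bool,
        prb (fun η => η e = true ∧ mstepSurv H W η j e.1) =
          prb (fun η => mstepSurv H W η j e.1) / 2 := by
      intro e
      apply prb_half
      intro η η' hx
      apply surv_congr H W η η' e hx
      intro i h1 h2 hc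
      have : ((i : ℕ) : ZMod W) = 0 := by simpa using hc
      rw [ZMod.natCast_eq_zero_iff] at this
      have := Nat.le_of_dvd (by omega) this
      omega
    have mono : ∀ e : (ZMod H × ZMod W) × Bool, ∀ η η' : (ZMod H × ZMod W) × Bool → Bool,
        η ≤ η' → (η e = true ∧ mstepSurv H W η j e.1) →
          (η' e = true ∧ mstepSurv H W η' j e.1) :=
      fun e η η' h hh => ⟨h e hh.1, surv_mono H W η η' h _ _ hh.2⟩
    have h1 : prb (fun η => mstepSurv H W η (j+1) v) ≤
        prb (fun η => (η e₁ = true ∧ mstepSurv H W η j e₁.1) ∨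
          (η e₂ = true ∧ mstepSurv H W η j e₂.1)) := by
      apply prb_mono
      rintro η ⟨e, hm, ho, hs⟩
      rcases he e hm with rfl | rfl
      · exact Or.inl ⟨ho, hs⟩
      · exact Or.inr ⟨ho, hs⟩
    have h2 := prb_or (fun η => η e₁ = true ∧ mstepSurv H W η j e₁.1)
      (fun η => η e₂ = true ∧ mstepSurv H W η j e₂.1)
    have h3 := prb_fkg _ _ (mono e₁) (mono e₂)
    rw [half, half] at h2 h3
    have b1 := ih (by omega) e₁.1
    have b2 := ih (by omega) e₂.1
    have n1 := prb_nonneg (fun η => mstepSurv H W η j e₁.1)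
    have n2 := prb_nonneg (fun η => mstepSurv H W η j e₂.1)
    have o1 := prb_le_one (fun η => mstepSurv H W η j e₁.1)
    set p := prb (fun η => mstepSurv H W η j e₁.1)
    set q := prb (fun η => mstepSurv H W η j e₂.1)
    set a : ℝ := 4 / ((j:ℝ) + 4) with ha
    have ha1 : a ≤ 1 := by rw [ha, div_le_one (by positivity)]; linarith [Nat.cast_nonneg (α := ℝ) j]
    have h4 : prb (fun η => mstepSurv H W η (j+1) v) ≤ p/2 + q/2 - p/2*(q/2) := by linarith
    have h5 : p/2 + q/2 - p/2*(q/2) ≤ a - a^2/4 := by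
      nlinarith [mul_nonneg (sub_nonneg.2 b1) (sub_nonneg.2 b2),
        mul_nonneg (sub_nonneg.2 b1) (sub_nonneg.2 ha1), mul_nonneg (sub_nonneg.2 b2) (sub_nonneg.2 ha1)]
    have h6 : a - a^2/4 ≤ 4 / (((j+1 : ℕ):ℝ) + 4) := by
      rw [ha]; push_cast
      have : (0:ℝ) ≤ j := Nat.cast_nonneg j
      rw [div_pow, div_div, div_sub_div _ _ (by positivity) (by positivity),
        div_le_div_iff₀ (by positivity) (by positivity)]
      nlinarith [mul_nonneg this this]
    linarith

theorem harm_bound (n : ℕ) :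
    ∑ j ∈ Finset.range n, 4 / ((j:ℝ) + 4) ≤ 4 * Real.log (((n:ℝ) + 3) / 3) := by
  induction n with
  | zero => simp
  | succ n ih =>
    rw [Finset.sum_range_succ]
    have hn : (0:ℝ) ≤ n := Nat.cast_nonneg n
    have h := Real.one_sub_inv_le_log_of_pos (x := ((n:ℝ)+4)/((n:ℝ)+3)) (by positivity)
    have h2 : Real.log ((((n+1:ℕ):ℝ) + 3) / 3) = Real.log (((n:ℝ) + 3) / 3)
        + Real.log (((n:ℝ)+4)/((n:ℝ)+3)) := by
      rw [← Real.log_mul (by positivity) (by positivity)]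
      congr 1
      push_cast
      field_simp
      ring
    have h3 : 1 - (((n:ℝ)+4)/((n:ℝ)+3))⁻¹ = 1 / ((n:ℝ)+4) := by
      field_simp
      ring
    have h4 : 4 / ((n:ℝ) + 4) = 4 * (1 / ((n:ℝ)+4)) := by ring
    rw [h2, h4]
    linarith

theorem sum_zmod (W : ℕ) [NeZero W] (f : ℕ → ℝ) (t : ZMod W) :
    ∑ s : ZMod W, f (t - s).val = ∑ j ∈ Finset.range W, f j := by
  refine (Equiv.sum_comp (Equiv.subLeft t) (fun x : ZMod W => f x.val)).trans ?_
  cases W with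
  | zero => exact absurd rfl (NeZero.ne 0)
  | succ m => exact Fin.sum_univ_eq_sum_range f (m+1)

/-- In the monotone ensemble on `Ω_{H,W}`, the Las Vegas
exploration picks a uniformly random time slice `t₀` and follows all open
directed paths from the vertices of slice `t₀` forward for `W` steps, reading
the bits of both outgoing edges of every vertex reached within fewer than `W`
steps.  For every `ε > 0` there is `W₀` such that for all `W ≥ W₀` and all
`H = 2^d`, each given input bit is read with probability at most
`(4 + ε)·W⁻¹·log W` (probability over the uniform slice `t₀` and the `2·H·W`
uniform edge bits). -/
theorem statement13 :
    ∀ ε > (0 : ℝ), ∃ W₀ : ℕ, ∀ W ≥ W₀, ∀ d H : ℕ, H = 2 ^ d →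
      ∀ e : (ZMod H × ZMod W) × Bool,
        (Nat.card {p : ZMod W × ((ZMod H × ZMod W) × Bool → Bool) //
            ∃ u : ZMod H, ∃ j < W, openReach H W p.2 j (u, p.1) e.1} : ℝ)
            / ((W : ℝ) * 2 ^ (2 * H * W))
          ≤ (4 + ε) * Real.log W / W := by
  intro ε hε
  refine ⟨2, ?_⟩
  intro W hW d H hH e
  haveI : NeZero W := ⟨by omega⟩
  haveI : NeZero H := ⟨by rw [hH]; positivity⟩
  classical
  have hWp : (0:ℝ) < W := by exact_mod_cast (by omega : 0 < W)
  have hW2 : (2:ℝ) ≤ W := by exact_mod_cast hW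
  have hcard : Fintype.card ((ZMod H × ZMod W) × Bool) = 2 * H * W := by
    simp [Fintype.card_prod, ZMod.card]; ring
  have h1 : (Nat.card {p : ZMod W × ((ZMod H × ZMod W) × Bool → Bool) //
      ∃ u : ZMod H, ∃ j < W, openReach H W p.2 j (u, p.1) e.1} : ℝ)
      ≤ ∑ s : ZMod W, 2 ^ (2 * H * W) *
        prb (fun η => mstepSurv H W η (e.1.2 - s).val e.1) := by
    rw [Nat.card_eq_fintype_card, Fintype.card_subtype, Finset.card_filter,
      Fintype.sum_prod_type]
    push_cast
    apply Finset.sum_le_sum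
    intro s _
    rw [prb_eq, hcard, mul_div_cancel₀ _ (by positivity), Finset.sum_boole]
    norm_cast
    apply Finset.card_le_card
    intro η hη
    simp only [Finset.mem_filter, Finset.mem_univ, true_and] at hη ⊢
    obtain ⟨u, j, hj, hr⟩ := hη
    have ht := reach_time H W η j (u, s) e.1 hr
    have : (e.1.2 - s).val = j := by
      rw [ht]; simp [ZMod.val_natCast, Nat.mod_eq_of_lt hj]
    rw [this]
    exact reach_surv H W η j (u, s) e.1 hr
  have h2 : ∑ s : ZMod W, 2 ^ (2 * H * W) *
        prb (fun η => mstepSurv H W η (e.1.2 - s).val e.1) ≤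
      2 ^ (2 * H * W) * ∑ s : ZMod W, 4 / (((e.1.2 - s).val : ℝ) + 4) := by
    rw [Finset.mul_sum]
    apply Finset.sum_le_sum
    intro s _
    gcongr
    exact surv_bound d H W hH _ (ZMod.val_lt _) _
  rw [sum_zmod W (fun j => 4 / ((j:ℝ) + 4))] at h2
  have h3 := harm_bound W
  have h4 : Real.log (((W:ℝ) + 3) / 3) ≤ Real.log W := by
    apply Real.log_le_log (by positivity)
    linarith
  have h5 : 0 ≤ Real.log W := Real.log_nonneg (by linarith)
  have hT : (0:ℝ) < 2 ^ (2 * H * W) := by positivity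
  rw [div_le_div_iff₀ (by positivity) hWp]
  have h6 : ∑ j ∈ Finset.range W, 4 / ((j:ℝ) + 4) ≤ (4 + ε) * Real.log W := by
    nlinarith [mul_nonneg hε.le h5]
  have h7 := h1.trans (h2.trans (mul_le_mul_of_nonneg_left h6 hT.le))
  calc _ ≤ (2 ^ (2 * H * W) * ((4 + ε) * Real.log W)) * (W:ℝ) :=
        mul_le_mul_of_nonneg_right h7 hWp.le
    _ = _ := by ring
end

section
/- Let H = 2^d, W ≥ d, and let N_{H,W} be the number of directed cycles of length exactly W in the wrapped extended butterfly Ω_{H,W} all of whose edges are open in the monotone ensemble. Then E[N_{H,W}²] ≤ exp(W/√(2H)) + exp(−W/√(2H)), and consequently Pr[N_{H,W} > 0] ≥ 1/(exp(W/√(2H)) + exp(−W/√(2H))). -/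
open Finset in
lemma aux_card_agree {α : Type*} [Fintype α] [DecidableEq α] (S : Finset α) (g : α → Bool) :
    (univ.filter (fun f : α → Bool => ∀ a ∈ S, f a = g a)).card * 2 ^ S.card
      = 2 ^ Fintype.card α := by
  have h : (univ.filter (fun f : α → Bool => ∀ a ∈ S, f a = g a))
      = Fintype.piFinset (fun a => if a ∈ S then {g a} else (univ : Finset Bool)) := by
    ext f
    simp only [mem_filter, mem_univ, true_and, Fintype.mem_piFinset]
    refine forall_congr' fun a => ?_
    by_cases ha : a ∈ S <;> simp [ha]
  rw [h, Fintype.card_piFinset]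
  have h2 : ∀ a, (if a ∈ S then {g a} else (univ : Finset Bool)).card
      = if a ∈ S then 1 else 2 := by
    intro a; by_cases ha : a ∈ S <;> simp [ha]
  simp only [h2]
  rw [Finset.prod_ite]
  simp only [prod_const_one, one_mul, prod_const]
  rw [← pow_add]
  congr 1
  have h3 := Finset.card_filter_add_card_filter_not (s := (univ : Finset α)) (fun a => a ∈ S)
  rw [Finset.filter_mem_eq_inter, Finset.univ_inter, Finset.card_univ] at h3
  omega

lemma aux_bits (d : ℕ) : ∀ (f g : ℕ → Bool),
    (∑ i ∈ Finset.range d, 2 ^ i * (if f i then 1 else 0)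
      = ∑ i ∈ Finset.range d, 2 ^ i * (if g i then 1 else 0 : ℕ)) → ∀ i < d, f i = g i := by
  induction d with
  | zero => intro f g _ i hi; omega
  | succ d ih =>
    intro f g h i hi
    rw [Finset.sum_range_succ', Finset.sum_range_succ'] at h
    have e : ∀ f : ℕ → Bool, ∑ i ∈ Finset.range d, 2 ^ (i+1) * (if f (i+1) then 1 else 0 : ℕ)
        = 2 * ∑ i ∈ Finset.range d, 2 ^ i * (if f (i+1) then 1 else 0 : ℕ) := by
      intro f; rw [Finset.mul_sum]; refine Finset.sum_congr rfl fun i _ => by ring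
    rw [e, e] at h
    have h0 : f 0 = g 0 := by
      cases h1 : f 0 <;> cases h2 : g 0 <;> simp [h1, h2] at h ⊢ <;> omega
    have h1 := ih (fun i => f (i+1)) (fun i => g (i+1)) (by rw [h0] at h; omega)
    cases i with
    | zero => exact h0
    | succ i => exact h1 i (by omega)

lemma aux_bits_lt (d : ℕ) (f : ℕ → Bool) :
    ∑ i ∈ Finset.range d, 2 ^ i * (if f i then 1 else 0 : ℕ) < 2 ^ d := by
  induction d with
  | zero => simp
  | succ d ih =>
    rw [Finset.sum_range_succ, pow_succ]
    split_ifs <;> omega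

lemma aux_bits_zmod (d H : ℕ) (hH : H = 2 ^ d) (f g : ℕ → Bool)
    (h : ∑ i ∈ Finset.range d, 2 ^ i * (if f i then 1 else 0 : ZMod H)
      = ∑ i ∈ Finset.range d, 2 ^ i * (if g i then 1 else 0 : ZMod H)) :
    ∀ i < d, f i = g i := by
  apply aux_bits
  have e : ∀ f : ℕ → Bool, ∑ i ∈ Finset.range d, 2 ^ i * (if f i then 1 else 0 : ZMod H)
      = ((∑ i ∈ Finset.range d, 2 ^ i * (if f i then 1 else 0 : ℕ) : ℕ) : ZMod H) := by
    intro f; push_cast; rfl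
  rw [e, e, ZMod.natCast_eq_natCast_iff'] at h
  rwa [Nat.mod_eq_of_lt (by rw [hH]; exact aux_bits_lt d f),
    Nat.mod_eq_of_lt (by rw [hH]; exact aux_bits_lt d g)] at h

/-- height determined by the last `d` bits -/
def auxC (d H W : ℕ) (b : ZMod W → Bool) (t : ZMod W) : ZMod H :=
  ∑ i ∈ Finset.range d, 2 ^ i * (if b (t - 1 - (i : ℕ)) then 1 else 0)

lemma aux_pow_zero (d H : ℕ) (hH : H = 2 ^ d) : (2 : ZMod H) ^ d = 0 := by
  have := ZMod.natCast_self H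
  rw [← this]
  conv_rhs => rw [show ((H : ℕ) : ZMod H) = ((2 ^ d : ℕ) : ZMod H) by rw [← hH]]
  push_cast; rfl

lemma auxC_closed (d H W : ℕ) (hH : H = 2 ^ d) (b : ZMod W → Bool) (t : ZMod W) :
    auxC d H W b (t + 1) = 2 * auxC d H W b t + (if b t then 1 else 0) := by
  unfold auxC
  have h1 := Finset.sum_range_succ (fun i : ℕ => (2 : ZMod H) ^ i * (if b (t - (i : ℕ)) then 1 else 0)) d
  rw [Finset.sum_range_succ', aux_pow_zero d H hH] at h1
  simp only [add_sub_cancel_right, Finset.mul_sum]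
  simp only [zero_mul, add_zero, pow_zero, one_mul, Nat.cast_zero, sub_zero] at h1
  rw [← h1]
  congr 1
  refine Finset.sum_congr rfl fun i _ => ?_
  rw [show t - ((i + 1 : ℕ) : ZMod W) = t - 1 - (i : ℕ) by push_cast; ring]
  ring

lemma aux_unroll (H W : ℕ) (γ : BCycle H W) (n : ℕ) : ∀ t : ZMod W,
    γ.c t = 2 ^ n * γ.c (t - (n : ℕ)) +
      ∑ i ∈ Finset.range n, 2 ^ i * (if γ.b (t - 1 - (i : ℕ)) then 1 else 0) := by
  induction n with
  | zero => intro t; simp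
  | succ n ih =>
    intro t
    rw [Finset.sum_range_succ, ih t]
    have := γ.closed (t - 1 - (n : ℕ))
    rw [show t - 1 - (n : ZMod W) + 1 = t - (n : ℕ) by ring] at this
    rw [this, show t - ((n + 1 : ℕ) : ZMod W) = t - 1 - (n : ℕ) by push_cast; ring]
    ring

lemma aux_c_eq (d H W : ℕ) (hH : H = 2 ^ d) (γ : BCycle H W) : γ.c = auxC d H W γ.b := by
  funext t
  rw [aux_unroll H W γ d t, aux_pow_zero d H hH, zero_mul, zero_add]
  rfl

/-- cycles are bit sequences -/
def auxEquiv (d H W : ℕ) (hH : H = 2 ^ d) : BCycle H W ≃ (ZMod W → Bool) where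
  toFun γ := γ.b
  invFun b := ⟨auxC d H W b, b, auxC_closed d H W hH b⟩
  left_inv γ := by
    have := aux_c_eq d H W hH γ
    rcases γ with ⟨c, b, h⟩
    simp only at this
    subst this
    rfl
  right_inv b := rfl

open Classical in
/-- window set -/
noncomputable def auxZ (d W : ℕ) [NeZero W] (b b' : ZMod W → Bool) : Finset (ZMod W) :=
  Finset.univ.filter (fun t => ∀ i ∈ Finset.range (d+1), b (t - (i : ℕ)) = b' (t - (i : ℕ)))

lemma aux_shared (d H W : ℕ) [NeZero W] (hH : H = 2 ^ d) (γ γ' : BCycle H W) (t : ZMod W)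
    (hc : γ.c t = γ'.c t) (hb : γ.b t = γ'.b t) : t ∈ auxZ d W γ.b γ'.b := by
  rw [aux_c_eq d H W hH γ, aux_c_eq d H W hH γ'] at hc
  have := aux_bits_zmod d H hH (fun i => γ.b (t - 1 - (i : ℕ))) (fun i => γ'.b (t - 1 - (i : ℕ))) hc
  simp only [auxZ, Finset.mem_filter, Finset.mem_univ, true_and, Finset.mem_range]
  intro i hi
  cases i with
  | zero => simpa using hb
  | succ i =>
    rw [show t - ((i + 1 : ℕ) : ZMod W) = t - 1 - (i : ℕ) by push_cast; ring]
    exact this i (by omega)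

section aux
open Finset

/-- boundary -/
def auxB (W : ℕ) [NeZero W] (Z : Finset (ZMod W)) : Finset (ZMod W) :=
  univ.filter (fun t => ¬ (t ∈ Z ↔ t - 1 ∈ Z))
/-- ends -/
def auxE (W : ℕ) [NeZero W] (Z : Finset (ZMod W)) : Finset (ZMod W) :=
  univ.filter (fun t => t ∉ Z ∧ t - 1 ∈ Z)
/-- starts -/
def auxS (W : ℕ) [NeZero W] (Z : Finset (ZMod W)) : Finset (ZMod W) :=
  univ.filter (fun t => t ∈ Z ∧ t - 1 ∉ Z)

lemma aux_SE (W : ℕ) [NeZero W] (Z : Finset (ZMod W)) : (auxS W Z).card = (auxE W Z).card := by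
  have h1 : (univ.filter (fun t => t - 1 ∈ Z)).card = Z.card := by
    apply Finset.card_bij (fun t _ => t - 1)
    · intro t ht; simpa using ht
    · intro a _ b _ h; simpa using h
    · intro a ha; exact ⟨a + 1, by simpa using ha, by simp⟩
  have h2 := Finset.card_filter_add_card_filter_not (s := univ.filter (fun t => t - 1 ∈ Z)) (fun t => t ∈ Z)
  have h3 := Finset.card_filter_add_card_filter_not (s := Z) (fun t => t - 1 ∈ Z)
  have h4 : (univ.filter (fun t => t - 1 ∈ Z)).filter (fun t => t ∈ Z) = Z.filter (fun t => t - 1 ∈ Z) := by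
    ext t; simp; tauto
  have h5 : (univ.filter (fun t => t - 1 ∈ Z)).filter (fun t => ¬ t ∈ Z) = auxE W Z := by
    ext t; simp [auxE]; tauto
  have h6 : Z.filter (fun t => ¬ t - 1 ∈ Z) = auxS W Z := by
    ext t; simp [auxS]
  rw [h4, h5] at h2
  rw [h6] at h3
  omega

lemma aux_B (W : ℕ) [NeZero W] (Z : Finset (ZMod W)) : (auxB W Z).card = 2 * (auxE W Z).card := by
  have : auxB W Z = auxS W Z ∪ auxE W Z := by
    ext t; simp [auxB, auxS, auxE]; tauto
  rw [this, Finset.card_union_of_disjoint, aux_SE]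
  · ring
  · rw [Finset.disjoint_left]; intro t; simp [auxS, auxE]; tauto

lemma aux_B_inj (W : ℕ) [NeZero W] (Z Z' : Finset (ZMod W)) (h0 : 0 ∈ Z ↔ 0 ∈ Z')
    (h : auxB W Z = auxB W Z') : Z = Z' := by
  have key : ∀ n : ℕ, ((n : ZMod W) ∈ Z ↔ (n : ZMod W) ∈ Z') := by
    intro n
    induction n with
    | zero => simpa using h0
    | succ n ih =>
      have := Finset.ext_iff.mp h ((n + 1 : ℕ) : ZMod W)
      simp only [auxB, mem_filter, mem_univ, true_and] at this
      rw [show ((n + 1 : ℕ) : ZMod W) - 1 = (n : ZMod W) by push_cast; ring] at this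
      tauto
  ext t
  have := key t.val
  rwa [ZMod.natCast_zmod_val] at this

lemma aux_sumZ (W : ℕ) [NeZero W] (y : ℝ) (hy : 0 ≤ y) :
    ∑ Z : Finset (ZMod W), y ^ (auxB W Z).card ≤ (1 + y) ^ W + (1 - y) ^ W := by
  have hp : ∀ z : ℝ, ∑ T : Finset (ZMod W), z ^ T.card = (1 + z) ^ W := by
    intro z
    have := Finset.sum_pow_mul_eq_add_pow z 1 (univ : Finset (ZMod W))
    simp only [one_pow, mul_one, Finset.powerset_univ, Finset.card_univ, ZMod.card] at this
    rw [this, add_comm]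
  let F : Bool × Finset (ZMod W) → ℝ := fun p => (y ^ p.2.card + (-y) ^ p.2.card) / 2
  have hF : ∑ p, F p = (1 + y) ^ W + (1 - y) ^ W := by
    rw [Fintype.sum_prod_type]
    simp only [F, Fintype.sum_bool, ← Finset.sum_div, Finset.sum_add_distrib, hp]
    rw [← sub_eq_add_neg]; ring
  have hF0 : ∀ p, 0 ≤ F p := by
    intro p
    have : |(-y) ^ p.2.card| = y ^ p.2.card := by rw [abs_pow, abs_neg, abs_of_nonneg hy]
    have h2 := neg_abs_le ((-y) ^ p.2.card)
    simp only [F]; linarith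
  let φ : Finset (ZMod W) → Bool × Finset (ZMod W) := fun Z => (decide (0 ∈ Z), auxB W Z)
  have hφ : Function.Injective φ := by
    intro Z Z' h
    simp only [φ, Prod.mk.injEq, decide_eq_decide] at h
    exact aux_B_inj W Z Z' h.1 h.2
  have h1 : ∀ Z, y ^ (auxB W Z).card = F (φ Z) := by
    intro Z
    simp only [F, φ, aux_B, pow_mul, neg_sq]; ring
  simp only [h1]
  rw [← hF, ← Finset.sum_image (f := F) (s := univ) (g := φ) (fun a _ b _ h => hφ h)]
  exact Finset.sum_le_sum_of_subset_of_nonneg (Finset.subset_univ _) (fun p _ _ => hF0 p)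

lemma aux_gap (d W : ℕ) [NeZero W] (b b' : ZMod W → Bool) (s : ZMod W) (hs : s ∈ auxS W (auxZ d W b b'))
    (i : ℕ) (hi : 1 ≤ i) (hid : i ≤ d) : s - (i : ℕ) ∉ auxZ d W b b' := by
  intro ht
  simp only [auxS, auxZ, mem_filter, mem_univ, true_and, mem_range] at hs ht
  apply hs.2
  intro j hj
  by_cases hjd : j = d
  · have := ht (d + 1 - i) (by omega)
    rw [show s - (i : ZMod W) - ((d + 1 - i : ℕ) : ZMod W) = s - 1 - (j : ℕ) by
      rw [Nat.cast_sub (by omega), hjd]; push_cast; ring] at this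
    exact this
  · have := hs.1 (j + 1) (by omega)
    rw [show s - ((j + 1 : ℕ) : ZMod W) = s - 1 - (j : ℕ) by push_cast; ring] at this
    exact this

lemma aux_E_ne (d W : ℕ) [NeZero W] (b b' : ZMod W → Bool) (e : ZMod W)
    (he : e ∈ auxE W (auxZ d W b b')) : b e ≠ b' e := by
  intro h
  simp only [auxE, auxZ, mem_filter, mem_univ, true_and, mem_range] at he
  apply he.1
  intro i hi
  cases i with
  | zero => simpa using h
  | succ i =>
    rw [show e - ((i + 1 : ℕ) : ZMod W) = e - 1 - (i : ℕ) by push_cast; ring]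
    exact he.2 i (by omega)

/-- positions forced to be in the preliminary gaps -/
def auxG (d W : ℕ) [NeZero W] (Z : Finset (ZMod W)) : Finset (ZMod W) :=
  (auxS W Z ×ˢ Finset.Icc 1 d).image (fun p => p.1 - (p.2 : ℕ))

lemma aux_G_eq (d W : ℕ) [NeZero W] (b b' : ZMod W → Bool) (t : ZMod W)
    (ht : t ∈ auxG d W (auxZ d W b b')) : b t = b' t := by
  simp only [auxG, mem_image, mem_product, mem_Icc, Prod.exists] at ht
  obtain ⟨s, i, ⟨hs, hi⟩, rfl⟩ := ht
  simp only [auxS, auxZ, mem_filter, mem_univ, true_and, mem_range] at hs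
  exact hs.1 i (by omega)

lemma aux_Z_eq (d W : ℕ) [NeZero W] (b b' : ZMod W → Bool) (t : ZMod W)
    (ht : t ∈ auxZ d W b b') : b t = b' t := by
  simp only [auxZ, mem_filter, mem_univ, true_and, mem_range] at ht
  simpa using ht 0 (by omega)

lemma aux_G_card (d W : ℕ) [NeZero W] (b b' : ZMod W → Bool) :
    (auxG d W (auxZ d W b b')).card = (auxE W (auxZ d W b b')).card * d := by
  have aux : ∀ s s' : ZMod W, s ∈ auxS W (auxZ d W b b') → s' ∈ auxS W (auxZ d W b b') →
      ∀ i i' : ℕ, 1 ≤ i → i' ≤ d → i < i' → s - (i : ℕ) ≠ s' - (i' : ℕ) := by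
    intro s s' hs hs' i i' hi hi' hlt h
    apply aux_gap d W b b' s' hs' (i' - i) (by omega) (by omega)
    rw [show s' - ((i' - i : ℕ) : ZMod W) = s by
      rw [Nat.cast_sub hlt.le]; linear_combination -h]
    simp only [auxS, mem_filter] at hs
    exact hs.2.1
  rw [auxG, Finset.card_image_of_injOn, Finset.card_product, aux_SE]
  · simp
  · rintro ⟨s, i⟩ h ⟨s', i'⟩ h' e
    simp only [coe_product, Set.mem_prod, mem_coe, mem_Icc] at h h' e
    rcases lt_trichotomy i i' with hl | hl | hl
    · exact absurd e (aux s s' h.1 h'.1 i i' h.2.1 h'.2.2 hl)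
    · subst hl; simp at e; simp [e]
    · exact absurd e.symm (aux s' s h'.1 h.1 i' i h'.2.1 h.2.2 hl)

lemma aux_fiber (d W : ℕ) [NeZero W] (b : ZMod W → Bool) (Z : Finset (ZMod W)) :
    (univ.filter (fun b' => auxZ d W b b' = Z)).card * 2 ^ (Z.card + (auxE W Z).card * (d + 1))
      ≤ 2 ^ W := by
  rcases (univ.filter (fun b' => auxZ d W b b' = Z)).eq_empty_or_nonempty with h | ⟨b₀, hb₀⟩
  · rw [h]; simp
  simp only [mem_filter, mem_univ, true_and] at hb₀
  let D := (Z ∪ auxG d W Z) ∪ auxE W Z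
  have hD : D.card = Z.card + (auxE W Z).card * (d + 1) := by
    have d1 : Disjoint Z (auxG d W Z) := by
      rw [Finset.disjoint_left]
      intro t ht hg
      simp only [auxG, mem_image, mem_product, mem_Icc, Prod.exists] at hg
      obtain ⟨s, i, ⟨hs, hi⟩, rfl⟩ := hg
      rw [← hb₀] at hs ht
      exact aux_gap d W b b₀ s hs i hi.1 hi.2 ht
    have d2 : Disjoint (Z ∪ auxG d W Z) (auxE W Z) := by
      rw [Finset.disjoint_left]
      intro t ht he
      rw [← hb₀] at ht he
      apply aux_E_ne d W b b₀ t he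
      rcases mem_union.mp ht with h | h
      · exact aux_Z_eq d W b b₀ t h
      · exact aux_G_eq d W b b₀ t h
    have := aux_G_card d W b b₀
    rw [hb₀] at this
    rw [card_union_of_disjoint d2, card_union_of_disjoint d1, this]; ring
  have h1 := aux_card_agree D (fun t => if t ∈ auxE W Z then !(b t) else b t)
  rw [ZMod.card, hD] at h1
  rw [← h1]
  apply Nat.mul_le_mul_right
  apply Finset.card_le_card
  intro b' hb'
  simp only [mem_filter, mem_univ, true_and] at hb' ⊢
  intro t ht
  by_cases he : t ∈ auxE W Z
  · rw [if_pos he]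
    rw [← hb'] at he
    have := aux_E_ne d W b b' t he
    revert this; cases b t <;> cases b' t <;> simp
  · rw [if_neg he]
    simp only [D, mem_union, he, or_false] at ht
    rw [← hb'] at ht
    rcases ht with h | h
    · exact (aux_Z_eq d W b b' t h).symm
    · exact (aux_G_eq d W b b' t h).symm

lemma aux_sum_b (d H W : ℕ) (hH : H = 2 ^ d) [NeZero W] (b : ZMod W → Bool) :
    ∑ b' : ZMod W → Bool, (2 : ℝ) ^ (auxZ d W b b').card ≤
      2 ^ W * (Real.exp (W / Real.sqrt (2 * H)) + Real.exp (-(W / Real.sqrt (2 * H)))) := by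
  set y : ℝ := 1 / Real.sqrt (2 * H) with hy
  have hHpos : (1 : ℝ) ≤ H := by rw [hH]; push_cast; exact one_le_pow₀ (by norm_num)
  have hsq : Real.sqrt (2 * H) ^ 2 = 2 * H := Real.sq_sqrt (by positivity)
  have hs1 : 1 ≤ Real.sqrt (2 * H) := by rw [Real.one_le_sqrt]; linarith
  have hy0 : 0 ≤ y := by positivity
  have hy1 : y ≤ 1 := by rw [hy, div_le_one (by linarith)]; exact hs1
  have hy2 : y ^ 2 = 1 / 2 ^ (d + 1) := by
    rw [hy, div_pow, hsq, one_pow, hH]; push_cast; rw [pow_succ]; ring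
  have hfib : ∑ b' : ZMod W → Bool, (2 : ℝ) ^ (auxZ d W b b').card
      = ∑ Z : Finset (ZMod W), ((univ.filter (fun b' => auxZ d W b b' = Z)).card : ℝ) * 2 ^ Z.card := by
    rw [← Finset.sum_fiberwise (s := univ) (g := fun b' => auxZ d W b b')]
    refine Finset.sum_congr rfl fun Z _ => ?_
    rw [Finset.sum_congr rfl (g := fun _ => (2 : ℝ) ^ Z.card)]
    · simp
    · intro b' hb'
      simp only [mem_filter, mem_univ, true_and] at hb'
      rw [hb']
  rw [hfib]
  calc _ ≤ ∑ Z : Finset (ZMod W), 2 ^ W * y ^ (auxB W Z).card := by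
        refine Finset.sum_le_sum fun Z _ => ?_
        have h := aux_fiber d W b Z
        have h' : ((univ.filter (fun b' => auxZ d W b b' = Z)).card : ℝ)
          * 2 ^ (Z.card + (auxE W Z).card * (d + 1)) ≤ 2 ^ W := by exact_mod_cast h
        rw [aux_B, pow_mul, hy2, div_pow, one_pow, ← pow_mul, mul_one_div, le_div_iff₀ (by positivity)]
        rw [pow_add, mul_comm _ (d + 1), ← mul_assoc] at h'
        exact h'
    _ = 2 ^ W * ∑ Z : Finset (ZMod W), y ^ (auxB W Z).card := by rw [Finset.mul_sum]
    _ ≤ 2 ^ W * ((1 + y) ^ W + (1 - y) ^ W) := by gcongr; exact aux_sumZ W y hy0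
    _ ≤ _ := by
        have e1 : Real.exp (W / Real.sqrt (2 * H)) = Real.exp y ^ W := by
          rw [← Real.exp_nat_mul, hy]; congr 1; ring
        have e2 : Real.exp (-(W / Real.sqrt (2 * H))) = Real.exp (-y) ^ W := by
          rw [← Real.exp_nat_mul, hy]; congr 1; ring
        rw [e1, e2]
        have := Real.add_one_le_exp y
        have := Real.add_one_le_exp (-y)
        gcongr
        · linarith
        · linarith

/-- edges of a cycle -/
def auxEdges {H W : ℕ} [NeZero H] [NeZero W] (γ : BCycle H W) : Finset ((ZMod H × ZMod W) × Bool) :=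
  univ.image (fun t => ((γ.c t, t), γ.b t))

lemma aux_edges_card {H W : ℕ} [NeZero H] [NeZero W] (γ : BCycle H W) :
    (auxEdges γ).card = W := by
  rw [auxEdges, card_image_of_injective, Finset.card_univ, ZMod.card]
  intro a b h
  simp only [Prod.mk.injEq] at h
  exact h.1.2

lemma aux_open_iff {H W : ℕ} [NeZero H] [NeZero W] (γ : BCycle H W)
    (η : (ZMod H × ZMod W) × Bool → Bool) : cycleOpen η γ ↔ ∀ e ∈ auxEdges γ, η e = true := by
  simp [cycleOpen, auxEdges]

lemma aux_inter_card (d H W : ℕ) (hH : H = 2 ^ d) [NeZero H] [NeZero W] (γ γ' : BCycle H W) :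
    (auxEdges γ ∩ auxEdges γ').card ≤ (auxZ d W γ.b γ'.b).card := by
  apply Finset.card_le_card_of_injOn (fun e => e.1.2)
  · intro e he
    simp only [auxEdges, coe_inter, coe_image, coe_univ, Set.image_univ, Set.mem_inter_iff, Set.mem_range] at he
    obtain ⟨⟨t, rfl⟩, ⟨t', h⟩⟩ := he
    simp only [Prod.mk.injEq] at h
    obtain ⟨⟨h1, rfl⟩, h2⟩ := h
    exact aux_shared d H W hH γ γ' _ h1.symm h2.symm
  · intro e he e' he' h
    simp only [auxEdges, coe_inter, coe_image, coe_univ, Set.image_univ, Set.mem_inter_iff, Set.mem_range] at he he'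
    obtain ⟨⟨t, rfl⟩, -⟩ := he
    obtain ⟨⟨t', rfl⟩, -⟩ := he'
    simp only at h
    subst h; rfl

end aux

/-- Let `H = 2^d`, `W ≥ d`, and let `N_{H,W}` be the number of
directed cycles of length exactly `W` in `Ω_{H,W}` all of whose edges are open
in the monotone ensemble.  Then
`E[N²] ≤ exp(W/√(2H)) + exp(−W/√(2H))`, and consequently
`Pr[N > 0] ≥ 1/(exp(W/√(2H)) + exp(−W/√(2H)))`. -/
theorem statement16 (d H W : ℕ) (hH : H = 2 ^ d) (hW : d ≤ W)
    [NeZero H] [NeZero W] :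
    (∑ η : (ZMod H × ZMod W) × Bool → Bool,
          (Nat.card {γ : BCycle H W // cycleOpen η γ} : ℝ) ^ 2)
        / Fintype.card ((ZMod H × ZMod W) × Bool → Bool)
      ≤ Real.exp (W / Real.sqrt (2 * H)) + Real.exp (-(W / Real.sqrt (2 * H)))
    ∧ (Nat.card {η : (ZMod H × ZMod W) × Bool → Bool //
          0 < Nat.card {γ : BCycle H W // cycleOpen η γ}} : ℝ)
        / Fintype.card ((ZMod H × ZMod W) × Bool → Bool)
      ≥ 1 / (Real.exp (W / Real.sqrt (2 * H)) + Real.exp (-(W / Real.sqrt (2 * H)))) := by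
  classical
  set M := Real.exp (W / Real.sqrt (2 * H)) + Real.exp (-(W / Real.sqrt (2 * H))) with hM
  have hMpos : 0 < M := by positivity
  let Eq := auxEquiv d H W hH
  letI : Fintype (BCycle H W) := Fintype.ofEquiv _ Eq.symm
  set n := Fintype.card ((ZMod H × ZMod W) × Bool) with hn
  have hcardη : Fintype.card ((ZMod H × ZMod W) × Bool → Bool) = 2 ^ n := by simp [hn]
  have hcardγ : Fintype.card (BCycle H W) = 2 ^ W := by
    rw [Fintype.card_congr Eq]; simp [ZMod.card]
  let N : ((ZMod H × ZMod W) × Bool → Bool) → ℝ := fun η =>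
    (Nat.card {γ : BCycle H W // cycleOpen η γ} : ℝ)
  have hN : ∀ η, N η = ∑ γ : BCycle H W, if cycleOpen η γ then (1 : ℝ) else 0 := by
    intro η
    simp only [N]
    rw [Nat.card_eq_fintype_card, Fintype.card_subtype, Finset.sum_boole]
  have hcount : ∀ S : Finset ((ZMod H × ZMod W) × Bool),
      ∑ η : (ZMod H × ZMod W) × Bool → Bool, (if ∀ e ∈ S, η e = true then (1 : ℝ) else 0)
        = 2 ^ n / 2 ^ S.card := by
    intro S
    rw [Finset.sum_boole, eq_div_iff (by positivity)]
    exact_mod_cast aux_card_agree S (fun _ => true)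
  have hEN : ∑ η, N η = 2 ^ n := by
    simp only [hN, aux_open_iff]
    rw [Finset.sum_comm]
    simp only [hcount, aux_edges_card, Finset.sum_const, Finset.card_univ, hcardγ, nsmul_eq_mul]
    push_cast
    field_simp
  have hEN2 : ∑ η, N η ^ 2 ≤ 2 ^ n * M := by
    have h1 : ∀ η, N η ^ 2 = ∑ γ : BCycle H W, ∑ γ' : BCycle H W,
        if ∀ e ∈ auxEdges γ ∪ auxEdges γ', η e = true then (1 : ℝ) else 0 := by
      intro η
      rw [sq, hN, Finset.sum_mul_sum]
      refine Finset.sum_congr rfl fun γ _ => Finset.sum_congr rfl fun γ' _ => ?_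
      simp only [Finset.forall_mem_union, ← aux_open_iff]
      by_cases h1 : cycleOpen η γ <;> by_cases h2 : cycleOpen η γ' <;> simp [h1, h2]
    simp only [h1]
    rw [Finset.sum_comm]
    calc _ ≤ ∑ γ : BCycle H W, 2 ^ n / 2 ^ W * M := by
          refine Finset.sum_le_sum fun γ _ => ?_
          rw [Finset.sum_comm]
          simp only [hcount]
          calc _ ≤ ∑ γ' : BCycle H W, (2 : ℝ) ^ n / 2 ^ (2 * W) * 2 ^ (auxZ d W γ.b γ'.b).card := by
                refine Finset.sum_le_sum fun γ' _ => ?_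
                have h2 := Finset.card_union_add_card_inter (auxEdges γ) (auxEdges γ')
                rw [aux_edges_card, aux_edges_card] at h2
                have h3 := aux_inter_card d H W hH γ γ'
                rw [div_mul_eq_mul_div, div_le_div_iff₀ (by positivity) (by positivity),
                  ← pow_add, ← pow_add, ← pow_add]
                exact pow_le_pow_right₀ (by norm_num) (by omega)
            _ = 2 ^ n / 2 ^ (2 * W) * ∑ b' : ZMod W → Bool, (2 : ℝ) ^ (auxZ d W γ.b b').card := by
                rw [← Finset.mul_sum]
                congr 1
                exact Fintype.sum_equiv Eq _ _ (fun γ' => rfl)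
            _ ≤ 2 ^ n / 2 ^ (2 * W) * (2 ^ W * M) := by
                gcongr
                exact aux_sum_b d H W hH γ.b
            _ = _ := by
                rw [two_mul, pow_add]; field_simp
      _ = _ := by
          rw [Finset.sum_const, Finset.card_univ, hcardγ, nsmul_eq_mul]
          push_cast
          field_simp
  rw [hcardη]
  push_cast
  have h2n : (0 : ℝ) < 2 ^ n := by positivity
  refine ⟨?_, ?_⟩
  · rw [div_le_iff₀ h2n, mul_comm M]
    exact hEN2
  · have hP : (Nat.card {η : (ZMod H × ZMod W) × Bool → Bool //
          0 < Nat.card {γ : BCycle H W // cycleOpen η γ}} : ℝ)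
        = ∑ η : (ZMod H × ZMod W) × Bool → Bool, (if 0 < N η then (1 : ℝ) else 0) ^ 2 := by
      simp only [ite_pow, one_pow, ne_eq, OfNat.ofNat_ne_zero, not_false_eq_true, zero_pow]
      rw [Nat.card_eq_fintype_card, Fintype.card_subtype, Finset.sum_boole]
      simp only [N, Nat.cast_pos]
    rw [hP]
    have hCS := Finset.sum_mul_sq_le_sq_mul_sq Finset.univ N
      (fun η => if 0 < N η then (1 : ℝ) else 0)
    have h4 : ∀ η, N η * (if 0 < N η then (1 : ℝ) else 0) = N η := by
      intro η
      split_ifs with h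
      · simp
      · have : 0 ≤ N η := Nat.cast_nonneg _
        linarith
    simp only [h4, hEN] at hCS
    set P := ∑ η : (ZMod H × ZMod W) × Bool → Bool, (if 0 < N η then (1 : ℝ) else 0) ^ 2 with hPd
    have hP0 : 0 ≤ P := Finset.sum_nonneg fun _ _ => sq_nonneg _
    have h5 : (2 ^ n : ℝ) ^ 2 ≤ 2 ^ n * M * P :=
      hCS.trans (mul_le_mul_of_nonneg_right hEN2 hP0)
    rw [ge_iff_le, div_le_div_iff₀ hMpos h2n]
    nlinarith [h5]
end

section
/- Let f : {−1,1}^n → {−1,1} and let A be a randomized decision-tree algorithm such that every tree in the support of A computes f exactly on every input, with revealment δ. Then ∑_{i=1}^n f̂({i}) ≤ √(n·δ). -/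
/-- A deterministic decision tree on `n` bits: a leaf outputs a Boolean value, an
internal node queries a bit and branches on its value. -/
inductive DTree (n : ℕ) : Type
  | leaf : Bool → DTree n
  | node : Fin n → DTree n → DTree n → DTree n

namespace DTree

/-- The output of a decision tree on input `x`. -/
def eval {n : ℕ} : DTree n → (Fin n → Bool) → Bool
  | .leaf b, _ => b
  | .node i t0 t1, x => if x i then t1.eval x else t0.eval x

/-- Whether the decision tree reads bit `j` when run on input `x`. -/
def readsBit {n : ℕ} : DTree n → (Fin n → Bool) → Fin n → Bool
  | .leaf _, _, _ => false
  | .node i t0 t1, x, j =>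
      (i == j) || (if x i then t1.readsBit x j else t0.readsBit x j)

end DTree

/-- A randomized decision-tree algorithm: a (finitely supported) probability
distribution over deterministic decision trees. -/
structure RandAlg (n : ℕ) where
  m : ℕ
  tree : Fin m → DTree n
  w : Fin m → ℝ
  w_nonneg : ∀ r, 0 ≤ w r
  w_sum : ∑ r, w r = 1

/-- `readProb A i` is the probability δ_i that bit `i` is read, over a uniformly
random input and the internal randomness of the algorithm. -/
noncomputable def readProb {n : ℕ} (A : RandAlg n) (i : Fin n) : ℝ :=
  (∑ r, ∑ x : Fin n → Bool, if (A.tree r).readsBit x i then A.w r else 0) / 2 ^ n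

/-- The probability that the algorithm's output differs from `f`, over a uniformly
random input and the internal randomness of the algorithm. -/
noncomputable def errProb {n : ℕ} (A : RandAlg n) (f : (Fin n → Bool) → Bool) : ℝ :=
  (∑ r, ∑ x : Fin n → Bool, if (A.tree r).eval x ≠ f x then A.w r else 0) / 2 ^ n

/-- A Boolean function is balanced if it takes the value `true` on exactly half
of all inputs. -/
def balanced {n : ℕ} (f : (Fin n → Bool) → Bool) : Prop :=
  2 * Nat.card {x : Fin n → Bool // f x = true} = 2 ^ n

/-- A Boolean function is monotone if it is order preserving coordinatewise. -/
def monotoneBF {n : ℕ} (f : (Fin n → Bool) → Bool) : Prop :=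
  ∀ x y : Fin n → Bool, (∀ i, x i ≤ y i) → f x ≤ f y

/-- The ±1 encoding of a Boolean value. -/
noncomputable def pm (b : Bool) : ℝ := if b then 1 else -1

/-- The variance of the ±1-valued function corresponding to `f`, for a uniformly
random input. -/
noncomputable def pmVar {n : ℕ} (f : (Fin n → Bool) → Bool) : ℝ :=
  (∑ x : Fin n → Bool, pm (f x) ^ 2) / 2 ^ n
    - ((∑ x : Fin n → Bool, pm (f x)) / 2 ^ n) ^ 2

/-- The Fourier coefficient `f̂(S) = E[f(x)·∏_{i∈S} x_i]` of a real-valued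
function of `n` ±1-encoded bits, for a uniformly random input. -/
noncomputable def fourierBF {n : ℕ} (f : (Fin n → Bool) → ℝ) (S : Finset (Fin n)) :
    ℝ :=
  (∑ x : Fin n → Bool, f x * ∏ i ∈ S, pm (x i)) / 2 ^ n

namespace DTree

/-- `i` is queried strictly before `j`. -/
def before {n : ℕ} : DTree n → (Fin n → Bool) → Fin n → Fin n → Bool
  | .leaf _, _, _, _ => false
  | .node k t0 t1, x, i, j =>
      if k = j then false else if k = i then true else
        (if x k then t1.before x i j else t0.before x i j)

/-- flip bit `j`. -/
def flip {n : ℕ} (j : Fin n) (x : Fin n → Bool) : Fin n → Bool :=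
  Function.update x j (!x j)

theorem flip_flip {n : ℕ} (j : Fin n) (x : Fin n → Bool) : flip j (flip j x) = x := by
  simp [flip]

theorem flip_same {n : ℕ} (j : Fin n) (x : Fin n → Bool) : flip j x j = !x j := by
  simp [flip]

theorem flip_ne {n : ℕ} {j k : Fin n} (h : k ≠ j) (x : Fin n → Bool) : flip j x k = x k := by
  simp [flip, h]

theorem readsBit_flip {n : ℕ} (t : DTree n) (x : Fin n → Bool) (j : Fin n) :
    t.readsBit (flip j x) j = t.readsBit x j := by
  induction t with
  | leaf b => rfl
  | node k t0 t1 h0 h1 =>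
    by_cases hk : k = j
    · simp [readsBit, hk]
    · simp [readsBit, flip_ne hk, h0, h1]

theorem before_flip {n : ℕ} (t : DTree n) (x : Fin n → Bool) (i j : Fin n) :
    t.before (flip j x) i j = t.before x i j := by
  induction t with
  | leaf b => rfl
  | node k t0 t1 h0 h1 =>
    by_cases hk : k = j
    · simp [before, hk]
    · simp [before, flip_ne hk, h0, h1]

theorem eval_flip {n : ℕ} (t : DTree n) (x : Fin n → Bool) (j : Fin n)
    (h : t.readsBit x j = false) : t.eval (flip j x) = t.eval x := by
  induction t with
  | leaf b => rfl
  | node k t0 t1 h0 h1 =>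
    by_cases hk : k = j
    · simp [readsBit, hk] at h
    · simp only [readsBit, eval, flip_ne hk] at h ⊢
      cases hx : x k <;> simp_all

/-- real indicator -/
def ind (b : Bool) : ℝ := if b then 1 else 0

theorem ind_mul {n : ℕ} (t : DTree n) (x : Fin n → Bool) (i j : Fin n) (hij : i ≠ j) :
    ind (t.readsBit x i) * ind (t.readsBit x j) =
      ind (t.readsBit x j) * ind (t.before x i j) +
      ind (t.readsBit x i) * ind (t.before x j i) := by
  induction t with
  | leaf b => simp [readsBit, before, ind]
  | node k t0 t1 h0 h1 =>
    by_cases hj : k = j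
    · subst hj
      simp [readsBit, before, ind, hij.symm]
    · by_cases hi : k = i
      · subst hi
        simp [readsBit, before, ind, hij]
      · have ei : (k == i) = false := by simpa using hi
        have ej : (k == j) = false := by simpa using hj
        cases hx : x k <;> simpa [readsBit, before, hi, hj, hx, ei, ej]

theorem sum_flip_zero {n : ℕ} (j : Fin n) (g : (Fin n → Bool) → ℝ)
    (h : ∀ x, g (flip j x) = - g x) : ∑ x, g x = 0 := by
  have e : ∑ x, g (flip j x) = ∑ x, g x :=
    Equiv.sum_comp (Function.Involutive.toPerm (flip j) (flip_flip j)) g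
  simp only [h, Finset.sum_neg_distrib] at e
  linarith

theorem pm_not (b : Bool) : pm (!b) = - pm b := by cases b <;> simp [pm]

theorem pm_sq (b : Bool) : pm b * pm b = 1 := by cases b <;> simp [pm]

theorem cross {n : ℕ} (t : DTree n) (i j : Fin n) (hij : i ≠ j) :
    ∑ x, ind (t.readsBit x j) * ind (t.before x i j) * (pm (x i) * pm (x j)) = 0 := by
  apply sum_flip_zero j
  intro x
  rw [readsBit_flip, before_flip, flip_same, flip_ne hij, pm_not]
  ring

/-- sum of the bits read -/
noncomputable def S {n : ℕ} (t : DTree n) (x : Fin n → Bool) : ℝ :=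
  ∑ i, ind (t.readsBit x i) * pm (x i)

theorem sum_S_sq {n : ℕ} (t : DTree n) :
    ∑ x, t.S x ^ 2 = ∑ i, ∑ x, ind (t.readsBit x i) := by
  have h1 : ∀ x, t.S x ^ 2 = ∑ i, ∑ j,
      (ind (t.readsBit x i) * pm (x i)) * (ind (t.readsBit x j) * pm (x j)) := by
    intro x
    rw [sq, S, Finset.sum_mul_sum]
  simp only [h1]
  rw [Finset.sum_comm]
  apply Finset.sum_congr rfl
  intro i _
  rw [Finset.sum_comm, Finset.sum_eq_single i]
  · apply Finset.sum_congr rfl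
    intro x _
    have := pm_sq (x i)
    have h2 : ind (t.readsBit x i) * ind (t.readsBit x i) = ind (t.readsBit x i) := by
      cases t.readsBit x i <;> simp [ind]
    rw [mul_mul_mul_comm, this, h2, mul_one]
  · intro j _ hj
    have a := cross t i j hj.symm
    have b := cross t j i hj
    rw [← add_zero (0 : ℝ)]
    nth_rewrite 1 [← a]
    rw [← b, ← Finset.sum_add_distrib]
    apply Finset.sum_congr rfl
    intro x _
    have := ind_mul t x i j hj.symm
    rw [mul_mul_mul_comm, this]
    ring
  · simp

theorem sum_f {n : ℕ} (t : DTree n) (i : Fin n) :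
    ∑ x, pm (t.eval x) * pm (x i) =
      ∑ x, pm (t.eval x) * (ind (t.readsBit x i) * pm (x i)) := by
  rw [← sub_eq_zero, ← Finset.sum_sub_distrib]
  apply sum_flip_zero i
  intro x
  rw [readsBit_flip, flip_same, pm_not]
  cases h : t.readsBit x i
  · rw [eval_flip t x i h]
    ring
  · simp [ind]

theorem bound {n : ℕ} (t : DTree n) :
    (∑ i, ∑ x, pm (t.eval x) * pm (x i)) ^ 2 ≤
      2 ^ n * ∑ i, ∑ x, ind (t.readsBit x i) := by
  have h : ∑ i, ∑ x, pm (t.eval x) * pm (x i) = ∑ x, pm (t.eval x) * t.S x := by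
    simp only [sum_f]
    rw [Finset.sum_comm]
    simp only [S, Finset.mul_sum]
  rw [h, ← sum_S_sq]
  refine (Finset.sum_mul_sq_le_sq_mul_sq _ _ _).trans (le_of_eq ?_)
  simp [sq, pm_sq]

end DTree

/-- If `A` is a randomized decision-tree algorithm computing
the Boolean function `f` exactly on every input, with revealment `δ` (every bit
is read with probability at most `δ`), then `∑_{i=1}^n f̂({i}) ≤ √(n·δ)`. -/
theorem statement17 (n : ℕ) (f : (Fin n → Bool) → Bool) (A : RandAlg n)
    (hcomp : ∀ r x, (A.tree r).eval x = f x)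
    (δ : ℝ) (hδ : ∀ i, readProb A i ≤ δ) :
    ∑ i : Fin n, fourierBF (fun x => pm (f x)) {i} ≤ Real.sqrt (n * δ) := by
  apply (le_abs_self _).trans
  apply Real.abs_le_sqrt
  have key : ∀ r, (∑ i : Fin n, fourierBF (fun x => pm (f x)) {i}) ^ 2 ≤
      (∑ i, ∑ x, DTree.ind ((A.tree r).readsBit x i)) / 2 ^ n := by
    intro r
    have hb := (A.tree r).bound
    simp only [hcomp] at hb
    simp only [fourierBF, Finset.prod_singleton, ← Finset.sum_div]
    rw [div_pow, div_le_div_iff₀ (by positivity) (by positivity)]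
    have h2 : (0 : ℝ) ≤ 2 ^ n := by positivity
    nlinarith [mul_le_mul_of_nonneg_right hb h2]
  have hsum : ∑ i, readProb A i =
      ∑ r, A.w r * ((∑ i, ∑ x, DTree.ind ((A.tree r).readsBit x i)) / 2 ^ n) := by
    simp only [readProb, ← Finset.sum_div, ← mul_div_assoc]
    congr 1
    rw [Finset.sum_comm]
    simp only [Finset.mul_sum, DTree.ind, mul_ite, mul_one, mul_zero]
  calc _ = ∑ r, A.w r * (∑ i : Fin n, fourierBF (fun x => pm (f x)) {i}) ^ 2 := by
        rw [← Finset.sum_mul, A.w_sum, one_mul]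
    _ ≤ ∑ i, readProb A i := by
        rw [hsum]
        exact Finset.sum_le_sum fun r _ => mul_le_mul_of_nonneg_left (key r) (A.w_nonneg r)
    _ ≤ ∑ i : Fin n, δ := Finset.sum_le_sum fun i _ => hδ i
    _ = n * δ := by simp
end

section
/- Let f : {−1,1}^n → {−1,1} and let A be a randomized decision-tree algorithm such that every tree in the support of A computes f exactly on every input, with read probabilities δ_1,…,δ_n on a uniform random input. Then Var(f) ≤ ∑_{i=1}^n δ_i · I_i(f). -/
/-- The influence `I_i(f)`: the probability that flipping coordinate `i` of a
uniformly random input changes the value of `f`. -/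
noncomputable def influence {n : ℕ} (f : (Fin n → Bool) → Bool) (i : Fin n) : ℝ :=
  (Nat.card {x : Fin n → Bool // f x ≠ f (Function.update x i (!x i))} : ℝ) / 2 ^ n

namespace DTree

/-- bit `i` is never queried in the tree -/
def Free {n : ℕ} (i : Fin n) : DTree n → Prop
  | .leaf _ => True
  | .node j t0 t1 => i ≠ j ∧ t0.Free i ∧ t1.Free i

/-- no bit is queried twice on a path -/
def NR {n : ℕ} : DTree n → Prop
  | .leaf _ => True
  | .node i t0 t1 => t0.Free i ∧ t1.Free i ∧ t0.NR ∧ t1.NR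

/-- restrict bit `i` to value `b` -/
def restr {n : ℕ} (i : Fin n) (b : Bool) : DTree n → DTree n
  | .leaf c => .leaf c
  | .node j t0 t1 => if j = i then (if b then t1.restr i b else t0.restr i b)
      else .node j (t0.restr i b) (t1.restr i b)

def hyb {n : ℕ} : DTree n → (Fin n → Bool) → (Fin n → Bool) → (Fin n → Bool)
  | .leaf _, _, y => y
  | .node i t0 t1, x, y =>
      Function.update (if x i then t1.hyb x y else t0.hyb x y) i (x i)

variable {n : ℕ}

theorem restr_free (i : Fin n) (b : Bool) (t : DTree n) : (t.restr i b).Free i := by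
  induction t with
  | leaf c => simp [restr, Free]
  | node j t0 t1 h0 h1 =>
    by_cases h : j = i
    · cases b <;> simp_all [restr]
    · simp [restr, h, Free, h0, h1, Ne.symm h]

theorem restr_free_of (i k : Fin n) (b : Bool) (t : DTree n) (hk : t.Free k) :
    (t.restr i b).Free k := by
  induction t with
  | leaf c => simp [restr, Free]
  | node j t0 t1 h0 h1 =>
    obtain ⟨a, b0, b1⟩ := hk
    by_cases h : j = i
    · cases b <;> simp_all [restr]
    · simp [restr, h, Free, h0 b0, h1 b1, a]

theorem restr_nr (i : Fin n) (b : Bool) (t : DTree n) (hk : t.NR) :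
    (t.restr i b).NR := by
  induction t with
  | leaf c => simp [restr, NR]
  | node j t0 t1 h0 h1 =>
    obtain ⟨a0, a1, b0, b1⟩ := hk
    by_cases h : j = i
    · cases b <;> simp_all [restr]
    · simp [restr, h, NR, h0 b0, h1 b1, restr_free_of, a0, a1]

theorem restr_eval (i : Fin n) (b : Bool) (t : DTree n) (x : Fin n → Bool) (hx : x i = b) :
    (t.restr i b).eval x = t.eval x := by
  induction t with
  | leaf c => simp [restr]
  | node j t0 t1 h0 h1 =>
    by_cases h : j = i
    · cases b <;> simp_all [restr, eval]
    · simp [restr, h, eval, h0, h1]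

theorem restr_reads (i : Fin n) (b : Bool) (t : DTree n) (x : Fin n → Bool) (hx : x i = b)
    (k : Fin n) (h : (t.restr i b).readsBit x k = true) : t.readsBit x k = true := by
  induction t with
  | leaf c => simpa [restr] using h
  | node j t0 t1 h0 h1 =>
    by_cases hj : j = i
    · cases b <;> simp_all [restr, readsBit]
    · cases hxj : x j <;> simp_all [restr, readsBit] <;> tauto

theorem exists_nr (t : DTree n) : ∃ t' : DTree n, t'.NR ∧ (∀ x, t'.eval x = t.eval x) ∧
    ∀ x k, t'.readsBit x k = true → t.readsBit x k = true := by
  induction t with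
  | leaf c => exact ⟨.leaf c, trivial, fun _ => rfl, fun _ _ h => h⟩
  | node j t0 t1 h0 h1 =>
    obtain ⟨s0, a0, e0, r0⟩ := h0
    obtain ⟨s1, a1, e1, r1⟩ := h1
    refine ⟨.node j (s0.restr j false) (s1.restr j true),
      ⟨restr_free _ _ _, restr_free _ _ _, restr_nr _ _ _ a0, restr_nr _ _ _ a1⟩, ?_, ?_⟩
    · intro x
      cases hx : x j
      · simp [eval, hx, restr_eval j false s0 x hx, e0]
      · simp [eval, hx, restr_eval j true s1 x hx, e1]
    · intro x k h
      cases hx : x j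
      · simp only [readsBit, hx, Bool.or_eq_true] at h ⊢
        exact h.imp id fun h => r0 x k (restr_reads j false s0 x hx k (by simpa using h))
      · simp only [readsBit, hx, Bool.or_eq_true] at h ⊢
        exact h.imp id fun h => r1 x k (restr_reads j true s1 x hx k (by simpa using h))

theorem free_eval (i : Fin n) (t : DTree n) (h : t.Free i) (x : Fin n → Bool) (c : Bool) :
    t.eval (Function.update x i c) = t.eval x := by
  induction t with
  | leaf c => rfl
  | node j t0 t1 h0 h1 =>
    obtain ⟨a, b0, b1⟩ := h
    simp [eval, h0 b0, h1 b1, Function.update_of_ne a.symm]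

theorem free_reads (i : Fin n) (t : DTree n) (h : t.Free i) (x : Fin n → Bool) (c : Bool)
    (k : Fin n) : t.readsBit (Function.update x i c) k = t.readsBit x k := by
  induction t with
  | leaf c => rfl
  | node j t0 t1 h0 h1 =>
    obtain ⟨a, b0, b1⟩ := h
    simp [readsBit, h0 b0, h1 b1, Function.update_of_ne a.symm]

theorem free_not_reads (i : Fin n) (t : DTree n) (h : t.Free i) (x : Fin n → Bool) :
    t.readsBit x i = false := by
  induction t with
  | leaf c => rfl
  | node j t0 t1 h0 h1 =>
    obtain ⟨a, b0, b1⟩ := h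
    simp [readsBit, h0 b0, h1 b1, a.symm]

theorem free_hyb (i : Fin n) (t : DTree n) (h : t.Free i) (x y : Fin n → Bool) (c : Bool) :
    t.hyb (Function.update x i c) y = t.hyb x y := by
  induction t with
  | leaf c => rfl
  | node j t0 t1 h0 h1 =>
    obtain ⟨a, b0, b1⟩ := h
    simp [hyb, h0 b0, h1 b1, Function.update_of_ne a.symm]

theorem eval_hyb (t : DTree n) (h : t.NR) (x y : Fin n → Bool) :
    t.eval (t.hyb x y) = t.eval x := by
  induction t with
  | leaf c => rfl
  | node j t0 t1 h0 h1 =>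
    obtain ⟨a0, a1, b0, b1⟩ := h
    cases hx : x j
    · simp [eval, hyb, hx, free_eval j t0 a0, h0 b0]
    · simp [eval, hyb, hx, free_eval j t1 a1, h1 b1]

theorem sum_flip (i : Fin n) (F : (Fin n → Bool) → ℝ) :
    ∑ x, F (Function.update x i (!x i)) = ∑ x, F x := by
  have hinv : Function.Involutive (fun x : Fin n → Bool => Function.update x i (!x i)) := by
    intro x; simp
  exact Equiv.sum_comp hinv.toPerm F

theorem sum_half (i : Fin n) (H : Bool → (Fin n → Bool) → ℝ)
    (hH : ∀ b x c, H b (Function.update x i c) = H b x) :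
    ∑ x, H (x i) x = (∑ x, H true x + ∑ x, H false x) / 2 := by
  have h := sum_flip i (fun x => H (x i) x)
  simp only [Function.update_self, hH] at h
  have h2 : ∑ x, H (x i) x + ∑ x : Fin n → Bool, H (!x i) x
      = ∑ x, H true x + ∑ x, H false x := by
    rw [← Finset.sum_add_distrib, ← Finset.sum_add_distrib]
    refine Finset.sum_congr rfl fun x _ => ?_
    cases x i <;> simp [add_comm]
  linarith

theorem sum_upd (i : Fin n) (F : (Fin n → Bool) → ℝ) :
    ∑ x, F (Function.update x i true) + ∑ x, F (Function.update x i false) = 2 * ∑ x, F x := by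
  have h := sum_half i (fun b x => F (Function.update x i b)) (by intros; simp)
  simp only [Function.update_eq_self] at h
  linarith

theorem sum_hyb (t : DTree n) (h : t.NR) (F : (Fin n → Bool) → ℝ) :
    ∑ x, ∑ y, F (t.hyb x y) = 2 ^ n * ∑ y, F y := by
  induction t generalizing F with
  | leaf c => simp [hyb]
  | node i t0 t1 h0 h1 =>
    obtain ⟨a0, a1, b0, b1⟩ := h
    have e := sum_half i (fun b x => ∑ y, F (Function.update
      (if b then t1.hyb x y else t0.hyb x y) i b)) (by
        intro b x c; simp [free_hyb i t0 a0, free_hyb i t1 a1])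
    simp only [hyb]
    rw [e]
    simp only [if_true, Bool.false_eq_true, if_false]
    rw [h0 b0 (fun z => F (Function.update z i false)),
      h1 b1 (fun z => F (Function.update z i true)), ← mul_add, sum_upd]
    ring

theorem osss (t : DTree n) (h : t.NR) (g : (Fin n → Bool) → ℝ) :
    ∑ x, ∑ y, |g (t.hyb x y) - g y| ≤
      (∑ j, (∑ x, if t.readsBit x j then (1:ℝ) else 0) *
        ∑ y, |g (Function.update y j (!y j)) - g y|) / 2 := by
  induction t with
  | leaf c => simp [hyb, readsBit]
  | node i t0 t1 h0 h1 =>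
    obtain ⟨a0, a1, b0, b1⟩ := h
    specialize h0 b0
    specialize h1 b1
    set L : Fin n → ℝ := fun j => ∑ y, |g (Function.update y j (!y j)) - g y| with hL
    have hR : ∀ j, (∑ x, if (DTree.node i t0 t1).readsBit x j then (1:ℝ) else 0)
        = (if i = j then 2 ^ n else 0) + ((∑ x, if t1.readsBit x j then (1:ℝ) else 0) +
          (∑ x, if t0.readsBit x j then (1:ℝ) else 0)) / 2 := by
      intro j
      by_cases hij : i = j
      · subst hij
        simp [readsBit, free_not_reads i t0 a0, free_not_reads i t1 a1]
      · have e := sum_half i (fun b x => if (if b then t1.readsBit x j else t0.readsBit x j)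
          then (1:ℝ) else 0) (by intro b x c; simp [free_reads i t0 a0, free_reads i t1 a1])
        simp only [if_true, Bool.false_eq_true, if_false] at e
        simp [readsBit, hij] at e ⊢
        exact e
    have e := sum_half i (fun b x => ∑ y, (|g (Function.update
      (if b then t1.hyb x y else t0.hyb x y) i b) - g (if b then t1.hyb x y else t0.hyb x y)|
        + |g (if b then t1.hyb x y else t0.hyb x y) - g y|)) (by
        intro b x c; simp [free_hyb i t0 a0, free_hyb i t1 a1])
    simp only [if_true, Bool.false_eq_true, if_false, Finset.sum_add_distrib] at e
    rw [sum_hyb t0 b0 (fun z => |g (Function.update z i false) - g z|),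
      sum_hyb t1 b1 (fun z => |g (Function.update z i true) - g z|)] at e
    have hLi : ∑ z, |g (Function.update z i true) - g z| +
        ∑ z, |g (Function.update z i false) - g z| = L i := by
      rw [hL, ← Finset.sum_add_distrib]
      refine Finset.sum_congr rfl fun z _ => ?_
      have hz := Function.update_eq_self i z
      cases hzi : z i <;> rw [hzi] at hz <;> simp [hz]
    have hle : ∑ x, ∑ y, |g ((DTree.node i t0 t1).hyb x y) - g y| ≤
        (2 ^ n * L i + (∑ x, ∑ y, |g (t1.hyb x y) - g y| +
          ∑ x, ∑ y, |g (t0.hyb x y) - g y|)) / 2 := by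
      rw [← hLi]
      refine le_trans ?_ (le_of_eq (e.trans (by ring)))
      simp only [← Finset.sum_add_distrib]
      refine Finset.sum_le_sum fun x _ => Finset.sum_le_sum fun y _ => ?_
      exact abs_sub_le _ _ _
    refine hle.trans ?_
    have : ∑ j, (∑ x, if (DTree.node i t0 t1).readsBit x j then (1:ℝ) else 0) * L j
        = 2 ^ n * L i + ((∑ j, (∑ x, if t1.readsBit x j then (1:ℝ) else 0) * L j) +
          (∑ j, (∑ x, if t0.readsBit x j then (1:ℝ) else 0) * L j)) / 2 := by
      simp only [hR, add_mul, Finset.sum_add_distrib, ite_mul, zero_mul, Finset.sum_ite_eq,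
        Finset.mem_univ, if_true]
      rw [← Finset.sum_add_distrib, Finset.sum_div]
      congr 1
      refine Finset.sum_congr rfl fun j _ => ?_
      ring
    change _ ≤ (∑ j, (∑ x, if (DTree.node i t0 t1).readsBit x j then (1:ℝ) else 0) * L j) / 2
    rw [this]
    linarith

theorem var_le (t : DTree n) (f : (Fin n → Bool) → Bool) (hf : ∀ x, t.eval x = f x) :
    pmVar f ≤ ∑ j, (∑ x, if t.readsBit x j then (1:ℝ) else 0) / 2 ^ n * influence f j := by
  obtain ⟨s, hs, he, hr⟩ := exists_nr t
  have key := osss s hs (fun x => pm (f x))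
  have hfs : ∀ x y, f (s.hyb x y) = f x := by
    intro x y
    rw [← hf, ← he, eval_hyb s hs, he, hf]
  simp only [hfs] at key
  have h1 : ∑ x, ∑ y, |pm (f x) - pm (f y)| = (2 ^ n) ^ 2 - (∑ x, pm (f x)) ^ 2 := by
    have : ∀ x y, |pm (f x) - pm (f y)| = 1 - pm (f x) * pm (f y) := by
      intro x y
      cases f x <;> cases f y <;> norm_num [pm]
    simp only [this, Finset.sum_sub_distrib, ← Finset.mul_sum, ← Finset.sum_mul]
    simp
    ring
  have h2 : ∀ j, ∑ y, |pm (f (Function.update y j (!y j))) - pm (f y)|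
      = 2 * 2 ^ n * influence f j := by
    intro j
    have : ∀ y, |pm (f (Function.update y j (!y j))) - pm (f y)|
        = 2 * (if f y ≠ f (Function.update y j (!y j)) then 1 else 0) := by
      intro y
      cases f y <;> cases f (Function.update y j (!y j)) <;> norm_num [pm]
    simp only [this, ← Finset.mul_sum, influence]
    rw [Nat.card_eq_fintype_card, Fintype.card_subtype, Finset.sum_boole]
    field_simp
  simp only [h2, h1] at key
  have hv : pmVar f = ((2 ^ n) ^ 2 - (∑ x, pm (f x)) ^ 2) / (2 ^ n) ^ 2 := by
    have : ∀ x, pm (f x) ^ 2 = 1 := by intro x; cases f x <;> norm_num [pm]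
    simp only [pmVar, this]
    simp
    field_simp
  have hp : (0:ℝ) < 2 ^ n := by positivity
  rw [hv, div_le_iff₀ (by positivity)]
  refine key.trans ?_
  rw [Finset.sum_div, Finset.sum_mul]
  refine Finset.sum_le_sum fun j _ => ?_
  have hi : 0 ≤ influence f j := by unfold influence; positivity
  have hm : (∑ x, if s.readsBit x j then (1:ℝ) else 0) ≤
      ∑ x, if t.readsBit x j then (1:ℝ) else 0 := by
    refine Finset.sum_le_sum fun x _ => ?_
    have := hr x j
    cases h : s.readsBit x j
    · simp; split_ifs <;> norm_num
    · simp [this h]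
  calc _ = (∑ x, if s.readsBit x j then (1:ℝ) else 0) * (2 ^ n * influence f j) := by ring
    _ ≤ (∑ x, if t.readsBit x j then (1:ℝ) else 0) * (2 ^ n * influence f j) := by gcongr
    _ = _ := by field_simp

end DTree

/-- If `A` is a randomized decision-tree algorithm computing
the Boolean function `f` exactly on every input, with read probabilities
`δ_1, …, δ_n` on a uniformly random input, then `Var(f) ≤ ∑_i δ_i · I_i(f)`. -/
theorem statement19 (n : ℕ) (f : (Fin n → Bool) → Bool) (A : RandAlg n)
    (hcomp : ∀ r x, (A.tree r).eval x = f x) :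
    pmVar f ≤ ∑ i : Fin n, readProb A i * influence f i := by
  have h : ∀ r, A.w r * pmVar f ≤ A.w r * ∑ j, (∑ x, if (A.tree r).readsBit x j then (1:ℝ) else 0)
      / 2 ^ n * influence f j := fun r =>
    mul_le_mul_of_nonneg_left (DTree.var_le (A.tree r) f (hcomp r)) (A.w_nonneg r)
  have h2 := Finset.sum_le_sum fun r (_ : r ∈ Finset.univ) => h r
  rw [← Finset.sum_mul, A.w_sum, one_mul] at h2
  refine h2.trans (le_of_eq ?_)
  simp only [Finset.mul_sum]
  rw [Finset.sum_comm]
  refine Finset.sum_congr rfl fun j _ => ?_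
  rw [readProb, Finset.sum_div, Finset.sum_mul]
  refine Finset.sum_congr rfl fun r _ => ?_
  have : (∑ x, if (A.tree r).readsBit x j then A.w r else 0)
      = A.w r * ∑ x, if (A.tree r).readsBit x j then (1:ℝ) else 0 := by
    rw [Finset.mul_sum]
    refine Finset.sum_congr rfl fun x _ => ?_
    split_ifs <;> simp
  rw [this]
  ring
end
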